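/- For every t > 0 and every y ∈ X: q_t y > 0 if and only if there exists x0 ∈ X with q0 x0 > 0 such that for every coordinate i : Fin d either y i = x0 i or y i = m. Consequently, the support of the forward marginal is constant in time: for all s, t > 0 and all y ∈ X, q_s y > 0 if and only if q_t y > 0. -/

import Mathlib

open Finset

/-- Per-token absorbing transition kernel. -/
noncomputable def absK (S : ℕ) (m : Fin S) (t : ℝ) (a b : Fin S) : ℝ :=
  if a = b then (if a = m then 1 else Real.exp (-t))
  else (if b = m then 1 - Real.exp (-t) else 0)

/-- Forward marginal at time `t` of the absorbing diffusion started at `q0`. -/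
noncomputable def fwd (S d : ℕ) (m : Fin S) (q0 : (Fin d → Fin S) → ℝ) (t : ℝ)
    (x : Fin d → Fin S) : ℝ :=
  ∑ x0 : Fin d → Fin S, q0 x0 * ∏ i : Fin d, absK S m t (x0 i) (x i)

/-- Number of masked coordinates. -/
def nmask (S d : ℕ) (m : Fin S) (x : Fin d → Fin S) : ℕ :=
  (Finset.univ.filter (fun i => x i = m)).card

section NonnegativeSums

variable {α ι R : Type*}

theorem prod_pos_iff_of_nonneg [CommMonoidWithZero R] [PartialOrder R] [ZeroLEOneClass R]
    [PosMulStrictMono R] [Nontrivial R] {t : Finset ι} {f : ι → R} (hf : ∀ i ∈ t, 0 ≤ f i) :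
    0 < ∏ i ∈ t, f i ↔ ∀ i ∈ t, 0 < f i :=
  ⟨fun hprod i hi => (hf i hi).lt_of_ne' fun hzero => hprod.ne' (prod_eq_zero hi hzero),
    prod_pos⟩

theorem sum_mul_prod_pos_iff_of_nonneg [CommSemiring R] [PartialOrder R]
    [IsStrictOrderedRing R] {s : Finset α} {t : Finset ι} {w : α → R} {f : α → ι → R}
    (hw : ∀ a ∈ s, 0 ≤ w a) (hf : ∀ a ∈ s, ∀ i ∈ t, 0 ≤ f a i) :
    0 < ∑ a ∈ s, w a * ∏ i ∈ t, f a i ↔ ∃ a ∈ s, 0 < w a ∧ ∀ i ∈ t, 0 < f a i := by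
  have hprod : ∀ a ∈ s, 0 ≤ ∏ i ∈ t, f a i := fun a ha => prod_nonneg (hf a ha)
  rw [sum_pos_iff_of_nonneg fun a ha => mul_nonneg (hw a ha) (hprod a ha)]
  refine exists_congr fun a => and_congr_right fun ha => ?_
  rw [← prod_pos_iff_of_nonneg (hf a ha)]
  refine ⟨fun hterm => ⟨?_, ?_⟩, fun ⟨hwpos, hprodpos⟩ => mul_pos hwpos hprodpos⟩
  · exact (hw a ha).lt_of_ne' (left_ne_zero_of_mul hterm.ne')
  · exact (hprod a ha).lt_of_ne' (right_ne_zero_of_mul hterm.ne')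

end NonnegativeSums

theorem absK_nonneg {S : ℕ} (m : Fin S) {t : ℝ} (ht : 0 ≤ t) (a b : Fin S) :
    0 ≤ absK S m t a b := by
  have hexp : Real.exp (-t) ≤ 1 := Real.exp_le_one_iff.mpr (neg_nonpos.mpr ht)
  unfold absK
  split_ifs
  exacts [zero_le_one, (Real.exp_pos _).le, sub_nonneg.mpr hexp, le_rfl]

theorem absK_pos_iff {S : ℕ} (m : Fin S) {t : ℝ} (ht : 0 < t) (a b : Fin S) :
    0 < absK S m t a b ↔ b = a ∨ b = m := by
  have hexp : Real.exp (-t) < 1 := Real.exp_lt_one_iff.mpr (neg_lt_zero.mpr ht)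
  unfold absK
  split_ifs with hab _ hbm
  · exact iff_of_true zero_lt_one (.inl hab.symm)
  · exact iff_of_true (Real.exp_pos _) (.inl hab.symm)
  · exact iff_of_true (sub_pos.mpr hexp) (.inr hbm)
  · exact iff_of_false (lt_irrefl 0) (not_or.mpr ⟨Ne.symm hab, hbm⟩)

theorem absorbing_support_characterization_general {S d : ℕ} (m : Fin S)
    {q0 : (Fin d → Fin S) → ℝ} (hq0 : ∀ x, 0 ≤ q0 x) {t : ℝ} (ht : 0 < t)
    (y : Fin d → Fin S) :
    0 < fwd S d m q0 t y ↔
      ∃ x0 : Fin d → Fin S, 0 < q0 x0 ∧ ∀ i : Fin d, y i = x0 i ∨ y i = m := by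
  rw [fwd, sum_mul_prod_pos_iff_of_nonneg (fun x _ => hq0 x)
    fun x _ i _ => absK_nonneg m ht.le (x i) (y i)]
  simp only [mem_univ, true_and, forall_const, absK_pos_iff m ht]

/-- Support characterization of the forward marginal: `q_t(y) > 0` iff `y` is obtained
from some `x0` in the support of `q0` by masking some coordinates. Consequently, the
support of the forward marginal is constant in time. -/
theorem absorbing_support_characterization (S d : ℕ) (hS : 2 ≤ S) (hd : 1 ≤ d) (m : Fin S)
    (q0 : (Fin d → Fin S) → ℝ) (hq0 : ∀ x, 0 ≤ q0 x)
    (hq0sum : ∑ x : Fin d → Fin S, q0 x = 1) :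
    (∀ t : ℝ, 0 < t → ∀ y : Fin d → Fin S,
      (0 < fwd S d m q0 t y ↔
        ∃ x0 : Fin d → Fin S, 0 < q0 x0 ∧ ∀ i : Fin d, y i = x0 i ∨ y i = m)) ∧
    ∀ s t : ℝ, 0 < s → 0 < t → ∀ y : Fin d → Fin S,
      (0 < fwd S d m q0 s y ↔ 0 < fwd S d m q0 t y) :=
  ⟨fun _ ht => absorbing_support_characterization_general m hq0 ht,
    fun _ _ hs ht y => (absorbing_support_characterization_general m hq0 hs y).trans
      (absorbing_support_characterization_general m hq0 ht y).symm⟩
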